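/- arXiv:2506.10727 — 7 statements merged into one kernel-verified Lean document; each statement's English description precedes it below -/
import Mathlib

section
/- Let G be a finite group with subgroups H ≤ K ≤ G and J ≤ G, where J acts on the coset spaces G/H and G/K by left multiplication. Then |(G/H)^J| = Σ_{xK ∈ (G/K)^J} |(K/H)^{x⁻¹Jx}|, where the sum runs over the J-fixed cosets xK of G/K, x is any chosen representative of such a coset (note that x⁻¹Jx ≤ K whenever xK is J-fixed, so x⁻¹Jx acts on K/H by left multiplication), and each summand is independent of the choice of representative x. Equivalently, there is a bijection (G/H)^J ≅ ⨆_{[x] ∈ (G/K)^J} (K/H)^{x⁻¹Jx}. -/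
theorem aux_mk {G : Type*} [Group G] (H K : Subgroup G) (a b : K) :
    ((a : K ⧸ H.subgroupOf K) = (b : K ⧸ H.subgroupOf K)) ↔
      (((a : G) : G ⧸ H) = ((b : G) : G ⧸ H)) := by
  rw [QuotientGroup.eq, QuotientGroup.eq, Subgroup.mem_subgroupOf]
  simp

/-- The inclusion `K/H → G/H`. -/
def auxIota {G : Type*} [Group G] (H K : Subgroup G) (y : K ⧸ H.subgroupOf K) : G ⧸ H :=
  Quotient.liftOn' y (fun k => ((k : G) : G ⧸ H)) (by
    intro a b hab
    exact (aux_mk H K a b).1 (Quotient.sound' hab))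

theorem auxIota_mk {G : Type*} [Group G] (H K : Subgroup G) (k : K) :
    auxIota H K (k : K ⧸ H.subgroupOf K) = ((k : G) : G ⧸ H) := rfl

theorem auxIota_inj {G : Type*} [Group G] (H K : Subgroup G) :
    Function.Injective (auxIota H K) := by
  intro a b
  induction a using QuotientGroup.induction_on
  induction b using QuotientGroup.induction_on
  exact (aux_mk H K _ _).2

theorem auxIota_smul {G : Type*} [Group G] (H K : Subgroup G) (k : K) (y : K ⧸ H.subgroupOf K) :
    auxIota H K (k • y) = (k : G) • auxIota H K y := by
  induction y using QuotientGroup.induction_on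
  rfl

theorem aux_conj {G : Type*} [Group G] (K : Subgroup G) (w : G ⧸ K) (j : G) (h : j • w = w) :
    w.out⁻¹ * j * w.out ∈ K := by
  rw [← QuotientGroup.out_eq' w, MulAction.Quotient.smul_coe] at h
  have := QuotientGroup.eq.1 h.symm
  simpa [mul_assoc] using this

/-- For subgroups `H ≤ K ≤ G` and `J ≤ G`, there is a bijection
`(G/H)^J ≅ ⨆_{[x] ∈ (G/K)^J} (K/H)^{x⁻¹Jx}`, and correspondingly
`|(G/H)^J| = Σ_{xK ∈ (G/K)^J} |(K/H)^{x⁻¹Jx}|`. -/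
theorem stmt0 {G : Type*} [Group G] [Finite G] (H K J : Subgroup G) (hHK : H ≤ K) :
    (Nat.card {z : G ⧸ H // ∀ j ∈ J, j • z = z}
      = ∑ᶠ w : {w : G ⧸ K // ∀ j ∈ J, j • w = w},
          Nat.card {y : ↥K ⧸ H.subgroupOf K //
            ∀ j ∈ J, ∀ h : w.1.out⁻¹ * j * w.1.out ∈ K,
              (⟨w.1.out⁻¹ * j * w.1.out, h⟩ : K) • y = y})
    ∧ Nonempty ({z : G ⧸ H // ∀ j ∈ J, j • z = z} ≃
        Σ w : {w : G ⧸ K // ∀ j ∈ J, j • w = w},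
          {y : ↥K ⧸ H.subgroupOf K //
            ∀ j ∈ J, ∀ h : w.1.out⁻¹ * j * w.1.out ∈ K,
              (⟨w.1.out⁻¹ * j * w.1.out, h⟩ : K) • y = y}) := by
  classical
  have key : Nonempty ({z : G ⧸ H // ∀ j ∈ J, j • z = z} ≃
        Σ w : {w : G ⧸ K // ∀ j ∈ J, j • w = w},
          {y : ↥K ⧸ H.subgroupOf K //
            ∀ j ∈ J, ∀ h : w.1.out⁻¹ * j * w.1.out ∈ K,
              (⟨w.1.out⁻¹ * j * w.1.out, h⟩ : K) • y = y}) := by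
    have hfix : ∀ p : (Σ w : {w : G ⧸ K // ∀ j ∈ J, j • w = w},
          {y : ↥K ⧸ H.subgroupOf K //
            ∀ j ∈ J, ∀ h : w.1.out⁻¹ * j * w.1.out ∈ K,
              (⟨w.1.out⁻¹ * j * w.1.out, h⟩ : K) • y = y}),
        ∀ j ∈ J, j • (p.1.1.out • auxIota H K p.2.1) = p.1.1.out • auxIota H K p.2.1 := by
      intro p j hj
      have h := aux_conj K p.1.1 j (p.1.2 j hj)
      have h2 := congrArg (auxIota H K) (p.2.2 j hj h)
      rw [auxIota_smul] at h2
      conv_rhs => rw [← h2]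
      simp only [smul_smul]
      congr 1
      group
    refine ⟨(Equiv.ofBijective
      (fun p => ⟨p.1.1.out • auxIota H K p.2.1, hfix p⟩) ⟨?_, ?_⟩).symm⟩
    · rintro ⟨w, y⟩ ⟨w', y'⟩ h
      have h : w.1.out • auxIota H K y.1 = w'.1.out • auxIota H K y'.1 := congrArg Subtype.val h
      have hw : w = w' := by
        apply Subtype.ext
        obtain ⟨k, hk⟩ := QuotientGroup.mk_surjective y.1
        obtain ⟨k', hk'⟩ := QuotientGroup.mk_surjective y'.1
        rw [← hk, ← hk'] at h
        simp only [auxIota_mk, MulAction.Quotient.smul_coe, smul_eq_mul] at h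
        have h1 := hHK (QuotientGroup.eq.1 h)
        rw [← QuotientGroup.out_eq' w.1, ← QuotientGroup.out_eq' w'.1, QuotientGroup.eq]
        have h2 := K.mul_mem (K.mul_mem k.2 h1) (K.inv_mem k'.2)
        simpa [mul_assoc] using h2
      subst hw
      have := auxIota_inj H K (MulAction.injective _ h)
      rw [Subtype.ext this]
    · rintro ⟨z, hz⟩
      induction z using QuotientGroup.induction_on with | H g => ?_
      have hw : ∀ j ∈ J, j • (g : G ⧸ K) = (g : G ⧸ K) := by
        intro j hj
        have h := hz j hj
        rw [MulAction.Quotient.smul_coe] at h ⊢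
        exact QuotientGroup.eq.2 (hHK (QuotientGroup.eq.1 h))
      have hk : (g : G ⧸ K).out⁻¹ * g ∈ K := by
        rw [← QuotientGroup.eq, QuotientGroup.out_eq']
      have e : (g : G ⧸ K).out • auxIota H K
          ((⟨(g : G ⧸ K).out⁻¹ * g, hk⟩ : K) : K ⧸ H.subgroupOf K) = (g : G ⧸ H) := by
        rw [auxIota_mk, MulAction.Quotient.smul_coe]
        simp
      refine ⟨⟨⟨(g : G ⧸ K), hw⟩, ⟨((⟨(g : G ⧸ K).out⁻¹ * g, hk⟩ : K) : K ⧸ H.subgroupOf K), ?_⟩⟩,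
        Subtype.ext e⟩
      intro j hj h
      apply auxIota_inj H K
      apply MulAction.injective (g : G ⧸ K).out
      have h3 := hz j hj
      rw [auxIota_smul]
      change (g : G ⧸ K).out • (((g : G ⧸ K).out⁻¹ * j * (g : G ⧸ K).out) • _) =
        (g : G ⧸ K).out • _
      rw [mul_smul, e, smul_smul, ← mul_assoc, mul_inv_cancel, one_mul, h3]
  refine ⟨?_, key⟩
  obtain ⟨e⟩ := key
  have := Fintype.ofFinite {w : G ⧸ K // ∀ j ∈ J, j • w = w}
  rw [Nat.card_congr e, Nat.card_sigma, finsum_eq_sum_of_fintype]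
end

section
/- Let G be a finite group, let H, L ≤ K be subgroups of G, and let J ≤ L be a subgroup. Then the map sending the double coset of ℓ in J\L/(L ∩ ᵞH) to the double coset of ℓγ in J\K/H induces a bijection ⨆_{[γ] ∈ L\K/H} J\L/(L ∩ ᵞH) ≅ J\K/H, where the disjoint union runs over the double cosets LγH in K with a chosen representative γ of each. -/
theorem aux_mk_s2 {G : Type*} [Group G] (K H L J : Subgroup G)
    (hH : H ≤ K) (hL : L ≤ K) (hJ : J ≤ L) (γ : K) (a b : L) :
    DoubleCoset.mk (J.subgroupOf L)
      ((L ⊓ H.map (MulAut.conj (γ : G)).toMonoidHom).subgroupOf L) a =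
    DoubleCoset.mk (J.subgroupOf L)
      ((L ⊓ H.map (MulAut.conj (γ : G)).toMonoidHom).subgroupOf L) b ↔
    DoubleCoset.mk (J.subgroupOf K) (H.subgroupOf K)
      ⟨(a : G) * (γ : G), mul_mem (hL a.2) γ.2⟩ =
    DoubleCoset.mk (J.subgroupOf K) (H.subgroupOf K)
      ⟨(b : G) * (γ : G), mul_mem (hL b.2) γ.2⟩ := by
  rw [DoubleCoset.eq, DoubleCoset.eq]
  constructor
  · rintro ⟨j, hj, x, hx, rfl⟩
    obtain ⟨-, h, hh, hx⟩ := Subgroup.mem_subgroupOf.1 hx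
    refine ⟨⟨j, hL j.2⟩, hj, ⟨h, hH hh⟩, hh, ?_⟩
    apply Subtype.ext
    simp only [MulEquiv.coe_toMonoidHom, MulAut.conj_apply] at hx
    simp [← hx, mul_assoc]
  · rintro ⟨j, hj, h, hh, e⟩
    have hj' : (j : G) ∈ J := hj
    have e' : (b : G) * γ = j * (a * γ) * h := congrArg Subtype.val e
    have e2 : (γ : G) * h * (γ : G)⁻¹ = (a : G)⁻¹ * (j : G)⁻¹ * b := by
      rw [eq_mul_inv_of_mul_eq e']; group
    have hm : (γ : G) * h * (γ : G)⁻¹ ∈ L := by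
      rw [e2]
      exact mul_mem (mul_mem (inv_mem a.2) (inv_mem (hJ hj'))) b.2
    refine ⟨⟨j, hJ hj'⟩, hj', ⟨_, hm⟩, Subgroup.mem_subgroupOf.2 ⟨hm, h, hh, rfl⟩, ?_⟩
    apply Subtype.ext
    simp only [Subgroup.coe_mul, e2]
    group


/-- For subgroups `H, L ≤ K` of a finite group `G` and `J ≤ L`, the map
`[ℓ] ↦ [ℓγ]` induces a bijection `⨆_{[γ] ∈ L\K/H} J\L/(L ∩ ᵞH) ≅ J\K/H`. -/
theorem stmt2 {G : Type*} [Group G] [Finite G] (K H L J : Subgroup G)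
    (hH : H ≤ K) (hL : L ≤ K) (hJ : J ≤ L) :
    ∃ e : (Σ d : DoubleCoset.Quotient (↑(L.subgroupOf K) : Set K) (↑(H.subgroupOf K) : Set K),
            DoubleCoset.Quotient (↑(J.subgroupOf L) : Set L)
              (↑((L ⊓ H.map (MulAut.conj ((d.out : K) : G)).toMonoidHom).subgroupOf L) : Set L)) ≃
          DoubleCoset.Quotient (↑(J.subgroupOf K) : Set K) (↑(H.subgroupOf K) : Set K),
      ∀ (d : DoubleCoset.Quotient (↑(L.subgroupOf K) : Set K) (↑(H.subgroupOf K) : Set K)) (ℓ : L),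
        e ⟨d, DoubleCoset.mk (J.subgroupOf L)
              ((L ⊓ H.map (MulAut.conj ((d.out : K) : G)).toMonoidHom).subgroupOf L) ℓ⟩
          = DoubleCoset.mk (J.subgroupOf K) (H.subgroupOf K)
              ⟨(ℓ : G) * ((d.out : K) : G), mul_mem (hL ℓ.2) (d.out : K).2⟩ := by
  let f : (Σ d : DoubleCoset.Quotient (↑(L.subgroupOf K) : Set K) (↑(H.subgroupOf K) : Set K),
            DoubleCoset.Quotient (↑(J.subgroupOf L) : Set L)
              (↑((L ⊓ H.map (MulAut.conj ((d.out : K) : G)).toMonoidHom).subgroupOf L) : Set L)) →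
          DoubleCoset.Quotient (↑(J.subgroupOf K) : Set K) (↑(H.subgroupOf K) : Set K) :=
    fun p => Quotient.lift (fun ℓ : L => DoubleCoset.mk (J.subgroupOf K) (H.subgroupOf K)
              ⟨(ℓ : G) * ((p.1.out : K) : G), mul_mem (hL ℓ.2) (p.1.out : K).2⟩)
      (fun a b hab => (aux_mk_s2 K H L J hH hL hJ p.1.out a b).1 (Quotient.sound hab)) p.2
  have hf : Function.Bijective f := by
    constructor
    · rintro ⟨d, p⟩ ⟨d', q⟩ h
      obtain ⟨a, rfl⟩ := Quotient.exists_rep p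
      obtain ⟨b, rfl⟩ := Quotient.exists_rep q
      change DoubleCoset.mk (J.subgroupOf K) (H.subgroupOf K)
          ⟨(a : G) * ((d.out : K) : G), mul_mem (hL a.2) (d.out : K).2⟩ =
        DoubleCoset.mk (J.subgroupOf K) (H.subgroupOf K)
          ⟨(b : G) * ((d'.out : K) : G), mul_mem (hL b.2) (d'.out : K).2⟩ at h
      have hd : d = d' := by
        rw [← DoubleCoset.out_eq' _ _ d, ← DoubleCoset.out_eq' _ _ d', DoubleCoset.eq]
        obtain ⟨j, hj, k, hk, e⟩ := (DoubleCoset.eq _ _ _ _).1 h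
        have hj' : (j : G) ∈ J := hj
        have e' : (b : G) * (d'.out : K) = j * (a * (d.out : K)) * k := congrArg Subtype.val e
        refine ⟨⟨(b : G)⁻¹ * j * a, hL (mul_mem (mul_mem (inv_mem b.2) (hJ hj')) a.2)⟩,
          mul_mem (mul_mem (inv_mem b.2) (hJ hj')) a.2, k, hk, ?_⟩
        apply Subtype.ext
        change ((d'.out : K) : G) = (b : G)⁻¹ * j * a * (d.out : K) * k
        rw [eq_inv_mul_of_mul_eq e']
        group
      subst hd
      exact congrArg (Sigma.mk d) ((aux_mk_s2 K H L J hH hL hJ d.out a b).2 h)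
    · intro q
      obtain ⟨x, rfl⟩ := Quotient.exists_rep q
      obtain ⟨l, hl, k, hk, e⟩ := (DoubleCoset.eq (L.subgroupOf K) (H.subgroupOf K) _ x).1
        (DoubleCoset.out_eq' _ _ (DoubleCoset.mk (L.subgroupOf K) (H.subgroupOf K) x))
      refine ⟨⟨DoubleCoset.mk (L.subgroupOf K) (H.subgroupOf K) x,
        DoubleCoset.mk _ _ (⟨l, hl⟩ : L)⟩, ?_⟩
      refine (DoubleCoset.eq _ _ _ _).2 ⟨1, one_mem _, k, hk, ?_⟩
      rw [one_mul]
      exact e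
  exact ⟨Equiv.ofBijective f hf, fun d ℓ => rfl⟩
end

section
/- (Functoriality of transfer in the ghost.) Let G be a finite group with subgroups H ≤ L ≤ K ≤ G, and let a : Subgroup G → ℤ be a function satisfying a(h⁻¹Ih) = a(I) for every subgroup I ≤ H and every h ∈ H. Then for every subgroup J ≤ K: Σ_{kL ∈ K/L, k⁻¹Jk ≤ L} ( Σ_{ℓH ∈ L/H, (kℓ)⁻¹J(kℓ) ≤ H} a((kℓ)⁻¹J(kℓ)) ) = Σ_{mH ∈ K/H, m⁻¹Jm ≤ H} a(m⁻¹Jm). Here all sums are over the indicated coset spaces; the invariance hypothesis on a guarantees that each summand is independent of the chosen coset representatives. -/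
open scoped Classical

theorem aux_conj_s4 {G : Type*} [Group G] (J : Subgroup G) (g h : G) :
    J.map (MulAut.conj (g * h)⁻¹).toMonoidHom
      = (J.map (MulAut.conj g⁻¹).toMonoidHom).map (MulAut.conj h⁻¹).toMonoidHom := by
  rw [Subgroup.map_map]
  congr 1
  ext x
  simp [mul_assoc]

theorem aux_le {G : Type*} [Group G] (I H : Subgroup G) (h : G) (hh : h ∈ H) :
    I.map (MulAut.conj h⁻¹).toMonoidHom ≤ H ↔ I ≤ H := by
  rw [Subgroup.map_le_iff_le_comap]
  constructor
  · intro hI x hx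
    have := hI hx
    have h2 : h⁻¹ * x * h ∈ H := by simpa using this
    have h3 := H.mul_mem (H.mul_mem hh h2) (H.inv_mem hh)
    simpa [mul_assoc] using h3
  · intro hI x hx
    have h3 := H.mul_mem (H.mul_mem (H.inv_mem hh) (hI hx)) hh
    simpa using h3

theorem aux_out {G : Type*} [Group G] (H K : Subgroup G) (k : K) :
    ((k : G))⁻¹ * (((QuotientGroup.mk k : K ⧸ H.subgroupOf K).out : K) : G) ∈ H := by
  have h : (QuotientGroup.mk k : K ⧸ H.subgroupOf K)
      = QuotientGroup.mk (QuotientGroup.mk k : K ⧸ H.subgroupOf K).out :=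
    (QuotientGroup.out_eq' _).symm
  have := QuotientGroup.eq.1 h
  simpa [Subgroup.mem_subgroupOf] using this

theorem aux_eq {G : Type*} [Group G] (H K : Subgroup G) (x y : K ⧸ H.subgroupOf K)
    (h : ((x.out : K) : G)⁻¹ * ((y.out : K) : G) ∈ H) : x = y := by
  rw [← QuotientGroup.out_eq' x, ← QuotientGroup.out_eq' y]
  apply QuotientGroup.eq.2
  simpa [Subgroup.mem_subgroupOf] using h

/-- Functoriality of transfer in the ghost: for subgroups
`H ≤ L ≤ K ≤ G` and `a : Subgroup G → ℤ` invariant under `H`-conjugation on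
subgroups of `H`, and any `J ≤ K`:
`Σ_{kL ∈ K/L, J^k ≤ L} (Σ_{ℓH ∈ L/H, J^{kℓ} ≤ H} a(J^{kℓ})) = Σ_{mH ∈ K/H, J^m ≤ H} a(J^m)`. -/
theorem stmt4 {G : Type*} [Group G] [Finite G]
    (H L K : Subgroup G) (hHL : H ≤ L) (hLK : L ≤ K)
    (a : Subgroup G → ℤ)
    (ha : ∀ I : Subgroup G, I ≤ H → ∀ h ∈ H,
      a (I.map (MulAut.conj h⁻¹).toMonoidHom) = a I)
    (J : Subgroup G) (hJK : J ≤ K) :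
    (∑ᶠ x : ↥K ⧸ L.subgroupOf K,
        if J.map (MulAut.conj ((x.out : K) : G)⁻¹).toMonoidHom ≤ L then
          (∑ᶠ y : ↥L ⧸ H.subgroupOf L,
            if J.map (MulAut.conj (((x.out : K) : G) * ((y.out : L) : G))⁻¹).toMonoidHom ≤ H then
              a (J.map (MulAut.conj (((x.out : K) : G) * ((y.out : L) : G))⁻¹).toMonoidHom)
            else 0)
        else 0)
    = ∑ᶠ z : ↥K ⧸ H.subgroupOf K,
        if J.map (MulAut.conj ((z.out : K) : G)⁻¹).toMonoidHom ≤ H then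
          a (J.map (MulAut.conj ((z.out : K) : G)⁻¹).toMonoidHom)
        else 0 := by
  classical
  set F : G → ℤ := fun g => if J.map (MulAut.conj g⁻¹).toMonoidHom ≤ H then
    a (J.map (MulAut.conj g⁻¹).toMonoidHom) else 0 with hF
  have hFinv : ∀ g, ∀ h ∈ H, F (g * h) = F g := by
    intro g h hh
    simp only [hF]
    rw [aux_conj_s4]
    simp only [aux_le _ H h hh]
    split_ifs with hI
    · exact ha _ hI h hh
    · rfl
  have := Fintype.ofFinite (↥K ⧸ L.subgroupOf K)
  have := Fintype.ofFinite (↥L ⧸ H.subgroupOf L)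
  have := Fintype.ofFinite (↥K ⧸ H.subgroupOf K)
  let φ : (↥K ⧸ L.subgroupOf K) × (↥L ⧸ H.subgroupOf L) → ↥K ⧸ H.subgroupOf K :=
    fun p => QuotientGroup.mk (p.1.out * ⟨(p.2.out : G), hLK p.2.out.2⟩)
  have hφ : Function.Bijective φ := by
    constructor
    · rintro ⟨x, y⟩ ⟨x', y'⟩ h
      have h1 := QuotientGroup.eq.1 h
      have h2 : (((x.out : K) : G) * ((y.out : L) : G))⁻¹
          * (((x'.out : K) : G) * ((y'.out : L) : G)) ∈ H := by
        simpa [Subgroup.mem_subgroupOf] using h1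
      have hx : x = x' := by
        apply aux_eq
        have h3 := L.mul_mem (L.mul_mem y.out.2 (hHL h2)) (L.inv_mem y'.out.2)
        simpa [mul_assoc] using h3
      subst hx
      have hy : y = y' := by
        apply aux_eq
        simpa [mul_assoc] using h2
      rw [hy]
    · intro z
      obtain ⟨k, rfl⟩ := QuotientGroup.mk_surjective z
      have h1 := aux_out L K k
      have h1' := L.inv_mem h1
      set x : ↥K ⧸ L.subgroupOf K := QuotientGroup.mk k with hx
      let l : L := ⟨_, h1'⟩
      have h2 := aux_out H L l
      refine ⟨(x, QuotientGroup.mk l), ?_⟩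
      apply QuotientGroup.eq.2
      have h3 := H.inv_mem h2
      simpa [Subgroup.mem_subgroupOf, l, mul_assoc] using h3
  have hL : ∀ x : ↥K ⧸ L.subgroupOf K,
      (if J.map (MulAut.conj ((x.out : K) : G)⁻¹).toMonoidHom ≤ L then
        (∑ᶠ y : ↥L ⧸ H.subgroupOf L, F (((x.out : K) : G) * ((y.out : L) : G))) else 0)
      = ∑ y : ↥L ⧸ H.subgroupOf L, F (((x.out : K) : G) * ((y.out : L) : G)) := by
    intro x
    rw [finsum_eq_sum_of_fintype]
    split_ifs with h
    · rfl
    · symm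
      apply Finset.sum_eq_zero
      intro y _
      simp only [hF]
      rw [if_neg]
      intro h2
      rw [aux_conj_s4] at h2
      exact h ((aux_le _ L _ y.out.2).1 (h2.trans hHL))
  change (∑ᶠ x : ↥K ⧸ L.subgroupOf K,
      if J.map (MulAut.conj ((x.out : K) : G)⁻¹).toMonoidHom ≤ L then
        (∑ᶠ y : ↥L ⧸ H.subgroupOf L, F (((x.out : K) : G) * ((y.out : L) : G))) else 0)
    = ∑ᶠ z : ↥K ⧸ H.subgroupOf K, F ((z.out : K) : G)
  simp only [hL]
  rw [finsum_eq_sum_of_fintype, finsum_eq_sum_of_fintype, ← Fintype.sum_prod_type']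
  apply Fintype.sum_bijective φ hφ
  rintro ⟨x, y⟩
  have h := aux_out H K (x.out * ⟨(y.out : G), hLK y.out.2⟩)
  have h2 := hFinv (((x.out : K) : G) * ((y.out : L) : G)) _ h
  rw [← h2]
  simp [φ, mul_assoc]
end

section
/- (Functoriality of norm in the ghost.) Let G be a finite group with subgroups H ≤ L ≤ K ≤ G, and let a : Subgroup G → ℤ be a function satisfying a(h⁻¹Ih) = a(I) for every subgroup I ≤ H and every h ∈ H. Then for every subgroup J ≤ K: ∏_{[g] ∈ J\K/H} a(g⁻¹Jg ∩ H) = ∏_{[m] ∈ J\K/L} ∏_{[g] ∈ (m⁻¹Jm ∩ L)\L/H} a((mg)⁻¹J(mg) ∩ H), where the products run over the indicated double coset spaces with arbitrarily chosen representatives (the products do not depend on these choices, by the invariance hypothesis on a). -/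
theorem stmt5_aux {G : Type*} [Group G] (H : Subgroup G) (a : Subgroup G → ℤ)
    (ha : ∀ I : Subgroup G, I ≤ H → ∀ h ∈ H,
      a (I.map (MulAut.conj h⁻¹).toMonoidHom) = a I)
    (J : Subgroup G) (x y j h : G) (hj : j ∈ J) (hh : h ∈ H) (hy : y = j * x * h) :
    a (J.map (MulAut.conj y⁻¹).toMonoidHom ⊓ H) =
      a (J.map (MulAut.conj x⁻¹).toMonoidHom ⊓ H) := by
  rw [← ha (J.map (MulAut.conj x⁻¹).toMonoidHom ⊓ H) inf_le_right h hh]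
  congr 1
  subst hy
  ext z
  simp only [Subgroup.mem_inf, Subgroup.mem_map, MulEquiv.coe_toMonoidHom, MulAut.conj_apply]
  constructor
  · rintro ⟨⟨k, hk, rfl⟩, hz⟩
    refine ⟨h * ((j * x * h)⁻¹ * k * (j * x * h)⁻¹⁻¹) * h⁻¹, ⟨⟨j⁻¹ * k * j, ?_, by group⟩, ?_⟩, by group⟩
    · exact J.mul_mem (J.mul_mem (J.inv_mem hj) hk) hj
    · exact H.mul_mem (H.mul_mem hh hz) (H.inv_mem hh)
  · rintro ⟨w, ⟨⟨k, hk, rfl⟩, hz⟩, rfl⟩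
    refine ⟨⟨j * k * j⁻¹, J.mul_mem (J.mul_mem hj hk) (J.inv_mem hj), by group⟩, ?_⟩
    exact H.mul_mem (H.mul_mem (H.inv_mem hh) hz) (H.inv_mem (H.inv_mem hh))

/-- Functoriality of norm in the ghost: for subgroups
`H ≤ L ≤ K ≤ G` and `a : Subgroup G → ℤ` invariant under `H`-conjugation on
subgroups of `H`, and any `J ≤ K`:
`∏_{[g] ∈ J\K/H} a(J^g ∩ H) = ∏_{[m] ∈ J\K/L} ∏_{[g] ∈ (J^m ∩ L)\L/H} a(J^{mg} ∩ H)`. -/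
theorem stmt5 {G : Type*} [Group G] [Finite G]
    (H L K : Subgroup G) (hHL : H ≤ L) (hLK : L ≤ K)
    (a : Subgroup G → ℤ)
    (ha : ∀ I : Subgroup G, I ≤ H → ∀ h ∈ H,
      a (I.map (MulAut.conj h⁻¹).toMonoidHom) = a I)
    (J : Subgroup G) (hJK : J ≤ K) :
    (∏ᶠ d : DoubleCoset.Quotient (↑(J.subgroupOf K) : Set K) (↑(H.subgroupOf K) : Set K),
        a (J.map (MulAut.conj ((d.out : K) : G)⁻¹).toMonoidHom ⊓ H))
    = ∏ᶠ m : DoubleCoset.Quotient (↑(J.subgroupOf K) : Set K) (↑(L.subgroupOf K) : Set K),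
        ∏ᶠ e : DoubleCoset.Quotient
            (↑((J.map (MulAut.conj ((m.out : K) : G)⁻¹).toMonoidHom ⊓ L).subgroupOf L) : Set L)
            (↑(H.subgroupOf L) : Set L),
          a (J.map (MulAut.conj (((m.out : K) : G) * ((e.out : L) : G))⁻¹).toMonoidHom ⊓ H) := by
  classical
  have fin : ∀ (M : Subgroup G) (A B : Subgroup M),
      Finite (DoubleCoset.Quotient (A : Set M) (B : Set M)) := fun M A B =>
    inferInstanceAs (Finite (_root_.Quotient _))
  have := fun (M : Subgroup G) (A B : Subgroup M) => Fintype.ofFinite (DoubleCoset.Quotient (A : Set M) (B : Set M))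
  simp only [finprod_eq_prod_of_fintype]
  rw [← Fintype.prod_sigma']
  symm
  refine Fintype.prod_bijective (fun p => DoubleCoset.mk (J.subgroupOf K) (H.subgroupOf K)
    ((p.1.out : K) * ⟨((p.2.out : L) : G), hLK (p.2.out : L).2⟩)) ⟨?_, ?_⟩ _ _ ?_
  · rintro ⟨m, e⟩ ⟨m', e'⟩ hp
    obtain ⟨j, hj, h, hh, hp⟩ := (DoubleCoset.eq _ _ _ _).1 hp
    rw [Subgroup.mem_subgroupOf] at hj hh
    have hp' := congrArg (Subtype.val) hp
    simp only [Subgroup.coe_mul] at hp'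
    have hm : m = m' := by
      rw [← DoubleCoset.out_eq' _ _ m, ← DoubleCoset.out_eq' _ _ m']
      refine (DoubleCoset.eq _ _ _ _).2 ⟨j, hj,
        ⟨(e.out : L), hLK (e.out : L).2⟩ * h * ⟨(e'.out : L), hLK (e'.out : L).2⟩⁻¹, ?_, ?_⟩
      · rw [Subgroup.mem_subgroupOf]
        exact L.mul_mem (L.mul_mem (e.out : L).2 (hHL hh)) (L.inv_mem (e'.out : L).2)
      · rw [← mul_assoc, ← mul_assoc, eq_mul_inv_iff_mul_eq, hp]
        group
    subst hm
    congr 1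
    rw [← DoubleCoset.out_eq' _ _ e, ← DoubleCoset.out_eq' _ _ e']
    have key : ((m.out : K) : G)⁻¹ * j * (m.out : K) =
        (e'.out : L) * (h : G)⁻¹ * ((e.out : L) : G)⁻¹ := by
      rw [eq_mul_inv_iff_mul_eq, eq_mul_inv_iff_mul_eq, ← mul_right_inj ((m.out : K) : G), hp']
      group
    have hL : ((m.out : K) : G)⁻¹ * j * (m.out : K) ∈ L := by
      rw [key]
      exact L.mul_mem (L.mul_mem (e'.out : L).2 (L.inv_mem (hHL hh))) (L.inv_mem (e.out : L).2)
    refine (DoubleCoset.eq _ _ _ _).2 ⟨⟨_, hL⟩, ?_, ⟨h, hHL hh⟩, ?_, ?_⟩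
    · rw [Subgroup.mem_subgroupOf]
      refine ⟨⟨j, hj, ?_⟩, hL⟩
      simp
    · rw [Subgroup.mem_subgroupOf]
      exact hh
    · apply Subtype.ext
      simp only [Subgroup.coe_mul]
      rw [key]
      group
  · intro d
    obtain ⟨j, l, hj, hl, hm⟩ := DoubleCoset.mk_out_eq_mul (J.subgroupOf K) (L.subgroupOf K) d.out
    set m := DoubleCoset.mk (J.subgroupOf K) (L.subgroupOf K) d.out with hmdef
    rw [Subgroup.mem_subgroupOf] at hj hl
    obtain ⟨u, h, hu, hh, he⟩ := DoubleCoset.mk_out_eq_mul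
      ((J.map (MulAut.conj ((m.out : K) : G)⁻¹).toMonoidHom ⊓ L).subgroupOf L)
      (H.subgroupOf L) ⟨(l : G)⁻¹, L.inv_mem hl⟩
    refine ⟨⟨m, DoubleCoset.mk _ _ ⟨(l : G)⁻¹, L.inv_mem hl⟩⟩, ?_⟩
    rw [Subgroup.mem_subgroupOf] at hu hh
    obtain ⟨⟨k, hk, hku⟩, -⟩ := hu
    conv_rhs => rw [← DoubleCoset.out_eq' _ _ d]
    symm
    refine (DoubleCoset.eq _ _ _ _).2 ⟨⟨k, hJK hk⟩ * j, ?_, ⟨h, hLK (hHL hh)⟩, ?_, ?_⟩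
    · rw [Subgroup.mem_subgroupOf]
      exact J.mul_mem hk hj
    · rw [Subgroup.mem_subgroupOf]
      exact hh
    · apply Subtype.ext
      have hm' := congrArg (Subtype.val) hm
      simp only [Subgroup.coe_mul] at hm' ⊢
      rw [he]
      simp only [Subgroup.coe_mul]
      rw [← hku]
      simp only [MulEquiv.coe_toMonoidHom, MulAut.conj_apply]
      rw [hm']
      group
  · rintro ⟨m, e⟩
    obtain ⟨j, h, hj, hh, hm⟩ := DoubleCoset.mk_out_eq_mul (J.subgroupOf K) (H.subgroupOf K)
      ((m.out : K) * ⟨((e.out : L) : G), hLK (e.out : L).2⟩)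
    symm
    refine stmt5_aux H a ha J _ _ j h hj hh ?_
    exact congrArg Subtype.val hm
end

section
/- (Multiplicative double coset formula in the ghost.) Let G be a finite group, let H, L ≤ K be subgroups of G, and let a : Subgroup G → ℤ be a function satisfying a(h⁻¹Ih) = a(I) for every subgroup I ≤ H and every h ∈ H. Then for every subgroup J ≤ L: ∏_{[k] ∈ J\K/H} a(k⁻¹Jk ∩ H) = ∏_{[γ] ∈ L\K/H} ∏_{[ℓ] ∈ J\L/(L ∩ ᵞH)} a((ℓγ)⁻¹J(ℓγ) ∩ H), where the products run over the indicated double coset spaces with arbitrarily chosen representatives (the products do not depend on these choices, by the invariance hypothesis on a). -/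
theorem mem_conj_aux {G : Type*} [Group G] (J : Subgroup G) (g x : G) :
    x ∈ J.map (MulAut.conj g).toMonoidHom ↔ g⁻¹ * x * g ∈ J := by
  constructor
  · rintro ⟨y, hy, rfl⟩
    simpa [mul_assoc] using hy
  · intro h
    exact ⟨_, h, by simp [mul_assoc]⟩

theorem inv_aux {G : Type*} [Group G] (H J : Subgroup G) (a : Subgroup G → ℤ)
    (ha : ∀ I : Subgroup G, I ≤ H → ∀ h ∈ H,
      a (I.map (MulAut.conj h⁻¹).toMonoidHom) = a I)
    (k j h : G) (hj : j ∈ J) (hh : h ∈ H) :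
    a (J.map (MulAut.conj (j * k * h)⁻¹).toMonoidHom ⊓ H)
      = a (J.map (MulAut.conj k⁻¹).toMonoidHom ⊓ H) := by
  rw [← ha (J.map (MulAut.conj k⁻¹).toMonoidHom ⊓ H) inf_le_right h hh]
  congr 1
  ext x
  rw [mem_conj_aux, Subgroup.mem_inf, Subgroup.mem_inf, mem_conj_aux, mem_conj_aux]
  have e : (j * k * h)⁻¹⁻¹ * x * (j * k * h)⁻¹
      = j * (k⁻¹⁻¹ * (h⁻¹⁻¹ * x * h⁻¹) * k⁻¹) * j⁻¹ := by group
  rw [e, J.mul_mem_cancel_right (J.inv_mem hj), J.mul_mem_cancel_left hj,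
    H.mul_mem_cancel_right (H.inv_mem hh), inv_inv h, H.mul_mem_cancel_left hh]

theorem mk_eq_aux {G : Type*} [Group G] (K A B : Subgroup G) (x y : K) :
    DoubleCoset.mk (A.subgroupOf K) (B.subgroupOf K) x = DoubleCoset.mk (A.subgroupOf K) (B.subgroupOf K) y ↔
     ∃ p ∈ A.subgroupOf K, ∃ q ∈ B.subgroupOf K, y = p * x * q :=
  DoubleCoset.eq _ _ x y

theorem out_aux {G : Type*} [Group G] (K A B : Subgroup G) 
    (z : DoubleCoset.Quotient (↑(A.subgroupOf K) : Set K) (↑(B.subgroupOf K) : Set K)) :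
    DoubleCoset.mk (A.subgroupOf K) (B.subgroupOf K) z.out = z := Quotient.out_eq' z

/-- Multiplicative double coset formula in the ghost: for subgroups
`H, L ≤ K` of `G`, `a : Subgroup G → ℤ` invariant under `H`-conjugation on
subgroups of `H`, and `J ≤ L`:
`∏_{[k] ∈ J\K/H} a(J^k ∩ H) = ∏_{[γ] ∈ L\K/H} ∏_{[ℓ] ∈ J\L/(L∩ᵞH)} a(J^{ℓγ} ∩ H)`. -/
theorem stmt7 {G : Type*} [Group G] [Finite G]
    (K H L : Subgroup G) (hH : H ≤ K) (hL : L ≤ K)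
    (a : Subgroup G → ℤ)
    (ha : ∀ I : Subgroup G, I ≤ H → ∀ h ∈ H,
      a (I.map (MulAut.conj h⁻¹).toMonoidHom) = a I)
    (J : Subgroup G) (hJ : J ≤ L) :
    (∏ᶠ z : DoubleCoset.Quotient (↑(J.subgroupOf K) : Set K) (↑(H.subgroupOf K) : Set K),
        a (J.map (MulAut.conj ((z.out : K) : G)⁻¹).toMonoidHom ⊓ H))
    = ∏ᶠ d : DoubleCoset.Quotient (↑(L.subgroupOf K) : Set K) (↑(H.subgroupOf K) : Set K),
        ∏ᶠ y : DoubleCoset.Quotient (↑(J.subgroupOf L) : Set L)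
            (↑((L ⊓ H.map (MulAut.conj ((d.out : K) : G)).toMonoidHom).subgroupOf L) : Set L),
          a (J.map (MulAut.conj (((y.out : L) : G) * ((d.out : K) : G))⁻¹).toMonoidHom ⊓ H) := by
  classical
  have hfin : ∀ (M A B : Subgroup G),
      Finite (DoubleCoset.Quotient (↑(A.subgroupOf M) : Set M) (↑(B.subgroupOf M) : Set M)) :=
    fun M A B => Quotient.finite _
  have hft : ∀ (M A B : Subgroup G),
      Fintype (DoubleCoset.Quotient (↑(A.subgroupOf M) : Set M) (↑(B.subgroupOf M) : Set M)) :=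
    fun M A B => Fintype.ofFinite _
  simp only [finprod_eq_prod_of_fintype]
  rw [← Fintype.prod_sigma']
  symm
  let F : (Σ d : DoubleCoset.Quotient (↑(L.subgroupOf K) : Set K) (↑(H.subgroupOf K) : Set K),
      DoubleCoset.Quotient (↑(J.subgroupOf L) : Set L)
        (↑((L ⊓ H.map (MulAut.conj ((d.out : K) : G)).toMonoidHom).subgroupOf L) : Set L)) →
      DoubleCoset.Quotient (↑(J.subgroupOf K) : Set K) (↑(H.subgroupOf K) : Set K) :=
    fun p => DoubleCoset.mk (J.subgroupOf K) (H.subgroupOf K)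
      (Subgroup.inclusion hL p.2.out * p.1.out)
  refine Fintype.prod_bijective F ⟨?_, ?_⟩ _ _ ?_
  · rintro ⟨d, y⟩ ⟨d', y'⟩ hF
    obtain ⟨j, hj, h, hh, e⟩ := (mk_eq_aux _ _ _ _ _).1 hF
    dsimp only at e
    have hd : d = d' := by
      rw [← out_aux _ _ _ d, ← out_aux _ _ _ d', mk_eq_aux]
      refine ⟨(Subgroup.inclusion hL y'.out)⁻¹ * j * Subgroup.inclusion hL y.out, ?_, h, hh, ?_⟩
      · rw [Subgroup.mem_subgroupOf] at hj ⊢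
        exact L.mul_mem (L.mul_mem (L.inv_mem y'.out.2) (hJ hj)) y.out.2
      · have := eq_inv_mul_of_mul_eq e
        refine this.trans ?_
        group
    subst hd
    congr 1
    rw [← out_aux _ _ _ y, ← out_aux _ _ _ y', mk_eq_aux]
    rw [Subgroup.mem_subgroupOf] at hj hh
    have e' : (y'.out : G) * (d.out : K) = j * ((y.out : G) * (d.out : K)) * h :=
      congrArg (Subtype.val) e
    have e2 : ((d.out : K) : G) * h * ((d.out : K) : G)⁻¹ = (y.out : G)⁻¹ * (j : G)⁻¹ * y'.out := by
      rw [eq_mul_inv_of_mul_eq e']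
      group
    have hm : ((d.out : K) : G) * h * ((d.out : K) : G)⁻¹ ∈ L := by
      rw [e2]
      exact L.mul_mem (L.mul_mem (L.inv_mem y.out.2) (L.inv_mem (hJ hj))) y'.out.2
    refine ⟨⟨j, hJ hj⟩, hj, ⟨_, hm⟩, ?_, ?_⟩
    · rw [Subgroup.mem_subgroupOf, Subgroup.mem_inf, mem_conj_aux]
      refine ⟨hm, ?_⟩
      simpa [mul_assoc] using hh
    · ext
      simp only [Subgroup.coe_mul]
      rw [e2]
      group
  · intro z
    let d := DoubleCoset.mk (L.subgroupOf K) (H.subgroupOf K) z.out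
    obtain ⟨l, hl, h, hh, e⟩ := (mk_eq_aux _ _ _ _ _).1 (out_aux _ _ _ d)
    rw [Subgroup.mem_subgroupOf] at hl
    let y := DoubleCoset.mk (J.subgroupOf L)
      ((L ⊓ H.map (MulAut.conj ((d.out : K) : G)).toMonoidHom).subgroupOf L) ⟨l, hl⟩
    obtain ⟨j, hj, m, hm, e2⟩ := (mk_eq_aux _ _ _ _ _).1 (out_aux _ _ _ y)
    rw [Subgroup.mem_subgroupOf] at hj hh
    rw [Subgroup.mem_subgroupOf, Subgroup.mem_inf, mem_conj_aux] at hm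
    refine ⟨⟨d, y⟩, ?_⟩
    rw [← out_aux _ _ _ z]
    refine (mk_eq_aux _ _ _ _ _).2 ⟨⟨j, hL j.2⟩, hj,
      ⟨_, K.mul_mem (hH hm.2) h.2⟩, H.mul_mem hm.2 hh, ?_⟩
    have e3 : (l : G) = j * y.out * m := congrArg Subtype.val e2
    rw [e]
    ext
    simp only [Subgroup.coe_mul, Subgroup.coe_inclusion]
    rw [e3]
    group
  · rintro ⟨d, y⟩
    obtain ⟨j, hj, h, hh, e⟩ := (mk_eq_aux _ _ _ _ _).1 (out_aux _ _ _ (F ⟨d, y⟩))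
    have e' : (y.out : G) * (d.out : K) = j * ((F ⟨d, y⟩).out : K) * h := congrArg Subtype.val e
    dsimp only
    rw [e']
    exact inv_aux H J a ha _ _ _ hj hh
end

section
/- Let G be a finite group, p a prime, and H ≤ G a p-perfect subgroup, i.e. O^p(H) = H, where O^p(H) is the p-residual subgroup of the group H. Then there exist a positive integer n coprime to p and finite G-sets X and Y such that for every subgroup I ≤ G: |X^I| − |Y^I| = n if the image in G of O^p(I) is conjugate in G to H, and |X^I| − |Y^I| = 0 otherwise. (Here X^I denotes the set of I-fixed points of X.) -/
open scoped Classical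

/-- The `p`-residual subgroup `O^p(G)`: the intersection of all normal subgroups
`N ⊴ G` whose index `[G : N]` is a power of `p`. -/
def pResidual (p : ℕ) (G : Type*) [Group G] : Subgroup G :=
  ⨅ N ∈ {N : Subgroup G | N.Normal ∧ ∃ k : ℕ, N.index = p ^ k}, N


section aux18

open scoped Pointwise

set_option linter.unusedSectionVars false
set_option linter.style.haveILetI false

variable {G : Type*} [Group G]

lemma aux_mem_conj (g x : G) (I : Subgroup G) :
    x ∈ MulAut.conj g • I ↔ g⁻¹ * x * g ∈ I := by
  rw [Subgroup.mem_pointwise_smul_iff_inv_smul_mem, ← map_inv, MulAut.smul_def,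
    MulAut.conj_apply, inv_inv]

/-- image in `G` of the residual -/
def auxR (p : ℕ) (I : Subgroup G) : Subgroup G := (pResidual p ↥I).map I.subtype

lemma auxR_le (p : ℕ) (I : Subgroup G) : auxR p I ≤ I := Subgroup.map_subtype_le _

lemma aux_normal (p : ℕ) (K : Type*) [Group K] : (pResidual p K).Normal := by
  unfold pResidual
  refine Subgroup.normal_iInf_normal fun N => Subgroup.normal_iInf_normal fun h => h.1

lemma aux_pow (p : ℕ) (hp : p.Prime) (K : Type*) [Group K] [Finite K] :
    ∃ c : ℕ, ∀ g : K, g ^ p ^ c ∈ pResidual p K := by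
  refine ⟨Nat.card K, fun g => ?_⟩
  unfold pResidual
  simp only [Subgroup.mem_iInf]
  rintro N ⟨hN, k, hk⟩
  have h1 : k ≤ Nat.card K := by
    have : p ^ k ≤ Nat.card K := hk ▸ Nat.le_of_dvd Nat.card_pos N.index_dvd_card
    exact (Nat.lt_pow_self hp.one_lt).le.trans this
  obtain ⟨d, hd⟩ := Nat.exists_eq_add_of_le h1
  rw [hd, pow_add, pow_mul, ← hk]
  exact pow_mem (N.pow_index_mem g) _

variable [Finite G]

lemma auxR_pow (p : ℕ) (hp : p.Prime) (I : Subgroup G) :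
    ∃ c : ℕ, ∀ g ∈ I, g ^ p ^ c ∈ auxR p I := by
  obtain ⟨c, hc⟩ := aux_pow p hp I
  exact ⟨c, fun g hg => ⟨_, hc ⟨g, hg⟩, rfl⟩⟩

lemma auxR_conj_self (p : ℕ) (I : Subgroup G) (g : G) (hg : g ∈ I) (x : G) (hx : x ∈ auxR p I) :
    g * x * g⁻¹ ∈ auxR p I := by
  obtain ⟨y, hy, rfl⟩ := hx
  exact ⟨_, (aux_normal p I).conj_mem y hy ⟨g, hg⟩, rfl⟩

lemma auxR_min (p : ℕ) (hp : p.Prime) (I M : Subgroup G)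
    (h1 : ∀ g ∈ I, ∀ x ∈ M, g * x * g⁻¹ ∈ M)
    (h2 : ∀ g ∈ I, ∃ c : ℕ, g ^ p ^ c ∈ M) : auxR p I ≤ M := by
  haveI : Fact p.Prime := ⟨hp⟩
  have hn : (M.subgroupOf I).Normal := ⟨fun x hx g => h1 g g.2 x hx⟩
  have hpg : IsPGroup p (I ⧸ M.subgroupOf I) := by
    intro q
    obtain ⟨g, rfl⟩ := QuotientGroup.mk_surjective q
    obtain ⟨c, hc⟩ := h2 g g.2
    refine ⟨c, ?_⟩
    rw [← QuotientGroup.mk_pow, QuotientGroup.eq_one_iff]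
    exact hc
  have hi : ∃ k, (M.subgroupOf I).index = p ^ k := IsPGroup.iff_card.mp hpg
  have : pResidual p I ≤ M.subgroupOf I := iInf₂_le _ ⟨hn, hi⟩
  rintro _ ⟨y, hy, rfl⟩
  exact this hy

lemma auxR_mono (p : ℕ) (hp : p.Prime) {I J : Subgroup G} (h : I ≤ J) :
    auxR p I ≤ auxR p J := by
  obtain ⟨c, hc⟩ := auxR_pow p hp J
  exact auxR_min p hp _ _ (fun g hg x hx => auxR_conj_self p J g (h hg) x hx)
    fun g hg => ⟨c, hc g (h hg)⟩

lemma auxR_conj_le (p : ℕ) (hp : p.Prime) (I : Subgroup G) (g : G) :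
    auxR p (MulAut.conj g • I) ≤ MulAut.conj g • auxR p I := by
  obtain ⟨c, hc⟩ := auxR_pow p hp I
  refine auxR_min p hp _ _ ?_ ?_
  · intro a ha x hx
    rw [aux_mem_conj] at *
    have := auxR_conj_self p I _ ha _ hx
    convert this using 1
    group
  · intro a ha
    rw [aux_mem_conj] at ha
    refine ⟨c, ?_⟩
    rw [aux_mem_conj]
    have := hc _ ha
    have e := conj_pow (a := g⁻¹) (b := a) (i := p ^ c)
    rw [inv_inv] at e
    rwa [e] at this

lemma auxR_conj (p : ℕ) (hp : p.Prime) (I : Subgroup G) (g : G) :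
    auxR p (MulAut.conj g • I) = MulAut.conj g • auxR p I := by
  refine le_antisymm (auxR_conj_le p hp I g) ?_
  have := auxR_conj_le p hp (MulAut.conj g • I) g⁻¹
  rw [map_inv, inv_smul_smul] at this
  rw [Subgroup.pointwise_smul_subset_iff]
  exact this

lemma auxR_idem (p : ℕ) (hp : p.Prime) (I : Subgroup G) :
    auxR p (auxR p I) = auxR p I := by
  refine le_antisymm (auxR_le _ _) ?_
  obtain ⟨c, hc⟩ := auxR_pow p hp I
  obtain ⟨d, hd⟩ := auxR_pow p hp (auxR p I)
  refine auxR_min p hp _ _ ?_ ?_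
  · intro g hg x hx
    have h1 : MulAut.conj g • I = I := Subgroup.conj_smul_eq_self_of_mem hg
    have h2 : MulAut.conj g • auxR p (auxR p I) = auxR p (auxR p I) := by
      rw [← auxR_conj p hp, ← auxR_conj p hp, h1]
    rw [← h2, aux_mem_conj]
    convert hx using 1
    group
  · intro g hg
    refine ⟨c + d, ?_⟩
    rw [pow_add, pow_mul]
    exact hd _ (hc g hg)

/-- number of fixed points -/
noncomputable def auxFix (X : Type*) [MulAction G X] (I : Subgroup G) : ℕ :=
  Nat.card {x : X // ∀ i ∈ I, i • x = x}

lemma auxFix_conj (X : Type*) [MulAction G X] (I : Subgroup G) (g : G) :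
    auxFix X (MulAut.conj g • I) = auxFix X I := by
  unfold auxFix
  symm
  refine Nat.card_congr ((MulAction.toPerm g).subtypeEquiv fun x => ?_)
  simp only [MulAction.toPerm_apply]
  constructor
  · intro h i hi
    rw [aux_mem_conj] at hi
    have := h _ hi
    rwa [mul_smul, mul_smul, inv_smul_eq_iff] at this
  · intro h i hi
    have := h (g * i * g⁻¹) (by rw [aux_mem_conj]; convert hi using 1; group)
    rwa [mul_smul, inv_smul_smul, mul_smul, smul_left_cancel_iff] at this

lemma auxFix_mod (p : ℕ) (hp : p.Prime) (X : Type*) [Finite X] [MulAction G X] (I : Subgroup G) :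
    auxFix X (auxR p I) ≡ auxFix X I [MOD p] := by
  haveI : Fact p.Prime := ⟨hp⟩
  let F := {x : X // ∀ i ∈ auxR p I, i • x = x}
  have hst : ∀ i : I, ∀ x : F, ∀ j ∈ auxR p I, j • ((i : G) • x.1) = (i : G) • x.1 := by
    intro i x j hj
    have := x.2 _ (auxR_conj_self p I i⁻¹ (inv_mem i.2) j hj)
    rwa [inv_inv, mul_smul, mul_smul, inv_smul_eq_iff] at this
  letI act : MulAction I F :=
    { smul := fun i x => ⟨(i : G) • x.1, hst i x⟩
      one_smul := fun x => Subtype.ext (one_smul G x.1)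
      mul_smul := fun a b x => Subtype.ext (mul_smul (a : G) (b : G) x.1) }
  have hact : ∀ (i : I) (x : F), ((i • x : F) : X) = (i : G) • x.1 := fun _ _ => rfl
  haveI := aux_normal p I
  let φ : (I ⧸ pResidual p I) →* Equiv.Perm F :=
    QuotientGroup.lift _ (MulAction.toPermHom I F) (by
      intro i hi
      ext x
      exact x.2 _ ⟨i, hi, rfl⟩)
  letI act2 : MulAction (I ⧸ pResidual p I) F := MulAction.compHom F φ
  have hact2 : ∀ (i : I) (x : F), ((i : I ⧸ pResidual p I) • x : F) = i • x := fun _ _ => rfl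
  have hpg : IsPGroup p (I ⧸ pResidual p I) := by
    intro q
    obtain ⟨g, rfl⟩ := QuotientGroup.mk_surjective q
    obtain ⟨c, hc⟩ := aux_pow p hp I
    refine ⟨c, ?_⟩
    rw [← QuotientGroup.mk_pow, QuotientGroup.eq_one_iff]
    exact hc g
  have := hpg.card_modEq_card_fixedPoints F
  have hc : Nat.card (MulAction.fixedPoints (I ⧸ pResidual p I) F) = auxFix X I := by
    refine Nat.card_congr
      { toFun := fun y => ⟨y.1.1, fun i hi => ?_⟩
        invFun := fun x => ⟨⟨x.1, fun i hi => x.2 i (auxR_le p I hi)⟩, ?_⟩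
        left_inv := fun y => rfl
        right_inv := fun x => rfl }
    · have := y.2 ((⟨i, hi⟩ : I) : I ⧸ pResidual p I)
      rw [hact2] at this
      exact congrArg Subtype.val this
    · intro q
      obtain ⟨g, rfl⟩ := QuotientGroup.mk_surjective q
      rw [hact2]
      exact Subtype.ext (x.2 g g.2)
  rw [hc] at this
  exact this

lemma aux_sylow (p : ℕ) (hp : p.Prime) (K : Type*) [Group K] [Finite K] (M : Subgroup K)
    [M.Normal] : ∃ P : Subgroup K, M ≤ P ∧ (∀ g ∈ P, ∃ c : ℕ, g ^ p ^ c ∈ M) ∧ ¬ p ∣ P.index := by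
  haveI : Fact p.Prime := ⟨hp⟩
  obtain ⟨Q⟩ : Nonempty (Sylow p (K ⧸ M)) := inferInstance
  refine ⟨Q.toSubgroup.comap (QuotientGroup.mk' M), ?_, ?_, ?_⟩
  · intro h hh
    rw [Subgroup.mem_comap, QuotientGroup.mk'_apply, (QuotientGroup.eq_one_iff h).mpr hh]
    exact one_mem _
  · intro g hg
    obtain ⟨c, hc⟩ := Q.isPGroup' ⟨QuotientGroup.mk' M g, hg⟩
    refine ⟨c, ?_⟩
    have := congrArg Subtype.val hc
    simp only [SubmonoidClass.coe_pow, OneMemClass.coe_one] at this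
    rw [← map_pow, QuotientGroup.mk'_apply, QuotientGroup.eq_one_iff] at this
    exact this
  · rw [Subgroup.index_comap_of_surjective _ (QuotientGroup.mk'_surjective _)]
    exact Q.not_dvd_index

lemma aux_coset (P : Subgroup G) (g i : G) :
    i • (g : G ⧸ P) = g ↔ g⁻¹ * i * g ∈ P := by
  rw [eq_comm, MulAction.Quotient.smul_coe, QuotientGroup.eq, smul_eq_mul, mul_assoc]

/-- Existence of the Sylow overgroup. -/
lemma aux_exists_P (p : ℕ) (hp : p.Prime) (H : Subgroup G) (hH : auxR p H = H) :
    ∃ P : Subgroup G, H ≤ P ∧ auxR p P = H ∧ ¬ p ∣ auxFix (G ⧸ P) H := by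
  obtain ⟨N, hN⟩ : ∃ N, N = Subgroup.normalizer (H : Set G) := ⟨_, rfl⟩
  have hHN : H ≤ N := hN ▸ Subgroup.le_normalizer
  have hNm : ∀ g ∈ N, ∀ h, h ∈ H ↔ g * h * g⁻¹ ∈ H := fun g hg =>
    Subgroup.mem_normalizer_iff.mp (hN ▸ hg)
  haveI hn : (H.subgroupOf N).Normal := ⟨fun x hx g => (hNm g g.2 x).mp hx⟩
  obtain ⟨P', hP1, hP2, hPi⟩ := aux_sylow p hp N (H.subgroupOf N)
  obtain ⟨P, hP⟩ : ∃ P, P = P'.map N.subtype := ⟨_, rfl⟩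
  have hPN : P ≤ N := hP ▸ Subgroup.map_subtype_le _
  have hHP : H ≤ P := by
    intro h hh
    rw [hP]
    exact ⟨⟨h, hHN hh⟩, hP1 hh, rfl⟩
  have hRP : auxR p P = H := by
    refine le_antisymm (auxR_min p hp _ _ ?_ ?_) (hH.symm.le.trans (auxR_mono p hp hHP))
    · intro g hg x hx
      exact (hNm g (hPN hg) x).mp hx
    · rw [hP]
      rintro _ ⟨g, hg, rfl⟩
      obtain ⟨c, hc⟩ := hP2 g hg
      exact ⟨c, hc⟩
  refine ⟨P, hHP, hRP, ?_⟩
  have hset : (QuotientGroup.mk ⁻¹' {x : G ⧸ P | ∀ i ∈ H, i • x = x} : Set G) = N := by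
    ext g
    simp only [Set.mem_preimage, Set.mem_setOf_eq, SetLike.mem_coe]
    simp only [aux_coset]
    constructor
    · intro h
      have hle : MulAut.conj g⁻¹ • H ≤ P := by
        intro y hy
        rw [aux_mem_conj, inv_inv] at hy
        have := h _ hy
        convert this using 1
        group
      have hle2 := auxR_mono p hp hle
      rw [auxR_conj p hp, hRP, hH] at hle2
      have e1 : Nat.card (MulAut.conj g⁻¹ • H : Subgroup G) = Nat.card H :=
        (Nat.card_congr (Subgroup.equivSMul _ _).toEquiv).symm
      have e2 : MulAut.conj g⁻¹ • H = H := Subgroup.eq_of_le_of_card_ge hle2 e1.ge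
      rw [hN, Subgroup.mem_normalizer_iff]
      intro x
      conv_lhs => rw [← SetLike.mem_coe, ← e2, SetLike.mem_coe, aux_mem_conj, inv_inv]
    · intro h i hi
      apply hHP
      have := (hNm _ (inv_mem h) i).mp hi
      rwa [inv_inv] at this
  have h1 := Nat.card_congr
    (QuotientGroup.preimageMkEquivSubgroupProdSet P {x : G ⧸ P | ∀ i ∈ H, i • x = x})
  rw [hset, Nat.card_prod] at h1
  change Nat.card N = Nat.card P * auxFix (G ⧸ P) H at h1
  have h2 : Nat.card P' * P'.index = Nat.card N := P'.card_mul_index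
  have h3 : Nat.card P = Nat.card P' :=
    hP ▸ Nat.card_congr (P'.equivMapOfInjective N.subtype N.subtype_injective).symm.toEquiv
  have h4 : auxFix (G ⧸ P) H = P'.index := by
    have h5 : Nat.card P' * P'.index = Nat.card P' * auxFix (G ⧸ P) H := by
      rw [h2, ← h3]; exact h1
    exact (Nat.eq_of_mul_eq_mul_left Nat.card_pos h5).symm
  rwa [h4]

/-- marks of G-sets -/
def auxIsMark (f : Subgroup G → ℤ) : Prop :=
  ∃ (X : Type) (_ : Finite X) (_ : MulAction G X), ∀ I, f I = auxFix X I

lemma auxIsMark_fix (X : Type*) [Finite X] [MulAction G X] :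
    auxIsMark (fun I : Subgroup G => (auxFix X I : ℤ)) := by
  let e := Finite.equivFin X
  letI : MulAction G (Fin (Nat.card X)) := e.symm.mulAction G
  refine ⟨Fin (Nat.card X), inferInstance, inferInstance, fun I => ?_⟩
  unfold auxFix
  refine congrArg Nat.cast ?_
  refine Nat.card_congr (e.subtypeEquiv fun x => ?_)
  refine forall₂_congr fun i hi => ?_
  have : i • e x = e (i • x) := by
    rw [Equiv.smul_def, Equiv.symm_symm, Equiv.symm_apply_apply]
  rw [this, e.apply_eq_iff_eq]

lemma auxIsMark_add {f g : Subgroup G → ℤ} (hf : auxIsMark f) (hg : auxIsMark g) :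
    auxIsMark (f + g) := by
  obtain ⟨X, _, _, hX⟩ := hf
  obtain ⟨Y, _, _, hY⟩ := hg
  refine ⟨X ⊕ Y, inferInstance, inferInstance, fun I => ?_⟩
  rw [Pi.add_apply, hX, hY, ← Nat.cast_add]
  unfold auxFix
  rw [← Nat.card_sum]
  congr 1
  refine Nat.card_congr (Equiv.trans ?_ (Equiv.subtypeSum).symm)
  refine Equiv.sumCongr (Equiv.subtypeEquivRight fun x => ?_) (Equiv.subtypeEquivRight fun x => ?_)
  · simp [Sum.smul_inl]
  · simp [Sum.smul_inr]

lemma auxIsMark_mul {f g : Subgroup G → ℤ} (hf : auxIsMark f) (hg : auxIsMark g) :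
    auxIsMark (f * g) := by
  obtain ⟨X, _, _, hX⟩ := hf
  obtain ⟨Y, _, _, hY⟩ := hg
  refine ⟨X × Y, inferInstance, inferInstance, fun I => ?_⟩
  rw [Pi.mul_apply, hX, hY, ← Nat.cast_mul]
  unfold auxFix
  rw [← Nat.card_prod]
  congr 1
  refine Nat.card_congr (Equiv.trans (Equiv.subtypeProdEquivProd).symm ?_)
  refine Equiv.subtypeEquivRight fun x => ?_
  simp only [Prod.ext_iff, Prod.smul_fst, Prod.smul_snd]
  exact ⟨fun h i hi => ⟨h.1 i hi, h.2 i hi⟩,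
    fun h => ⟨fun i hi => (h i hi).1, fun i hi => (h i hi).2⟩⟩

lemma auxIsMark_zero : auxIsMark (0 : Subgroup G → ℤ) := by
  letI : MulAction G Empty := 
    { smul := fun _ x => x, one_smul := fun _ => rfl, mul_smul := fun _ _ _ => rfl }
  refine ⟨Empty, inferInstance, inferInstance, fun I => ?_⟩
  simp [auxFix]

lemma auxIsMark_one : auxIsMark (1 : Subgroup G → ℤ) := by
  letI : MulAction G Unit := { smul := fun _ x => x, one_smul := fun _ => rfl, mul_smul := fun _ _ _ => rfl }
  refine ⟨Unit, inferInstance, inferInstance, fun I => ?_⟩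
  simp [auxFix]

/-- the Burnside ring in its ghost ring -/
def auxB (G : Type*) [Group G] [Finite G] : Subring (Subgroup G → ℤ) where
  carrier := {f | ∃ a b, auxIsMark a ∧ auxIsMark b ∧ f = a - b}
  zero_mem' := ⟨0, 0, auxIsMark_zero, auxIsMark_zero, by simp⟩
  one_mem' := ⟨1, 0, auxIsMark_one, auxIsMark_zero, by simp⟩
  add_mem' := by
    rintro _ _ ⟨a, b, ha, hb, rfl⟩ ⟨c, d, hc, hd, rfl⟩
    exact ⟨a + c, b + d, auxIsMark_add ha hc, auxIsMark_add hb hd, by ring⟩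
  neg_mem' := by
    rintro _ ⟨a, b, ha, hb, rfl⟩
    exact ⟨b, a, hb, ha, by ring⟩
  mul_mem' := by
    rintro _ _ ⟨a, b, ha, hb, rfl⟩ ⟨c, d, hc, hd, rfl⟩
    exact ⟨a * c + b * d, a * d + b * c, auxIsMark_add (auxIsMark_mul ha hc) (auxIsMark_mul hb hd),
      auxIsMark_add (auxIsMark_mul ha hd) (auxIsMark_mul hb hc), by ring⟩

lemma aux_trick (p : ℕ) (hp : p.Prime) (f : Subgroup G → ℤ) (hf : f ∈ auxB G)
    (S : Set (Subgroup G)) (h0 : ∀ I, I ∉ S → f I = 0) (h1 : ∀ I ∈ S, ¬ (p : ℤ) ∣ f I) :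
    ∃ n : ℤ, ¬ (p : ℤ) ∣ n ∧ (fun I => if I ∈ S then n else 0) ∈ auxB G := by
  have hpp : Prime (p : ℤ) := Nat.prime_iff_prime_int.mp hp
  haveI := Fintype.ofFinite (Subgroup G)
  let T : Finset (Subgroup G) := Finset.univ.filter (· ∈ S)
  refine ⟨∏ J ∈ T, f J, ?_, ?_⟩
  · rw [hpp.dvd_finsetProd_iff]
    rintro ⟨J, hJ, h⟩
    exact h1 J (Finset.mem_filter.mp hJ).2 h
  · have hm : (((∏ J ∈ T, f J : ℤ) : Subgroup G → ℤ) - ∏ J ∈ T, (((f J : ℤ) : Subgroup G → ℤ) - f))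
        ∈ auxB G :=
      sub_mem (intCast_mem _ _) (prod_mem fun J _ => sub_mem (intCast_mem _ _) hf)
    convert hm using 1
    funext I
    simp only [Pi.sub_apply, Pi.intCast_apply, Finset.prod_apply]
    split_ifs with h
    · have hz : ∏ x ∈ T, (f x - f I) = 0 :=
        Finset.prod_eq_zero (i := I) (Finset.mem_filter.mpr ⟨Finset.mem_univ _, h⟩) (sub_self _)
      simp [hz]
    · simp [h0 I h]

/-- support of the idempotent -/
def auxS (p : ℕ) (H : Subgroup G) : Set (Subgroup G) :=
  {I | ∃ g : G, MulAut.conj g • auxR p I = H}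

lemma aux_main (p : ℕ) (hp : p.Prime) (m : ℕ) : ∀ H : Subgroup G, Nat.card H = m → auxR p H = H →
    ∃ n : ℤ, ¬ (p : ℤ) ∣ n ∧ (fun I => if I ∈ auxS p H then n else 0) ∈ auxB G := by
  have hpp : Prime (p : ℤ) := Nat.prime_iff_prime_int.mp hp
  induction m using Nat.strong_induction_on with
  | _ m ih =>
  intro H hm hH
  have ih' : ∀ K : Subgroup G, ∃ u ∈ auxB G, (∀ I ∈ auxS p H, ¬ (p : ℤ) ∣ u I) ∧
      (K < H → auxR p K = K → ∀ I ∈ auxS p K, u I = 0) := by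
    intro K
    by_cases hK : K < H ∧ auxR p K = K
    · have hlt : Nat.card K < Nat.card H := by
        have := Set.ncard_lt_ncard (SetLike.coe_ssubset_coe.mpr hK.1) (Set.toFinite _)
        exact this
      obtain ⟨n, hn, hB⟩ := ih _ (hm ▸ hlt) K rfl hK.2
      refine ⟨_, sub_mem (intCast_mem _ n) hB, ?_, ?_⟩
      · rintro I ⟨g, hg⟩
        have : I ∉ auxS p K := by
          rintro ⟨g', hg'⟩
          have e1 : Nat.card (MulAut.conj g • auxR p I : Subgroup G) = Nat.card (auxR p I) :=
            (Nat.card_congr (Subgroup.equivSMul _ _).toEquiv).symm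
          have e2 : Nat.card (MulAut.conj g' • auxR p I : Subgroup G) = Nat.card (auxR p I) :=
            (Nat.card_congr (Subgroup.equivSMul _ _).toEquiv).symm
          rw [hg] at e1
          rw [hg'] at e2
          omega
        simpa [this] using hn
      · intro _ _ I hI
        simp [hI]
    · refine ⟨1, one_mem _, ?_, fun h1 h2 => absurd ⟨h1, h2⟩ hK⟩
      intro I _ h
      exact hpp.not_dvd_one h
  choose u huB hu1 hu2 using ih'
  haveI := Fintype.ofFinite (Subgroup G)
  obtain ⟨P, hHP, hRP, hfix⟩ := aux_exists_P p hp H hH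
  refine aux_trick p hp ((fun I => (auxFix (G ⧸ P) I : ℤ)) * ∏ K, u K) ?_ _ ?_ ?_
  · exact mul_mem ⟨_, 0, auxIsMark_fix (G ⧸ P), auxIsMark_zero, by simp⟩ (prod_mem fun K _ => huB K)
  · intro I hI
    rw [Pi.mul_apply, Finset.prod_apply]
    by_cases h0 : auxFix (G ⧸ P) I = 0
    · simp [h0]
    · have hne : Nonempty {x : G ⧸ P // ∀ i ∈ I, i • x = x} := (Nat.card_ne_zero.mp h0).1
      obtain ⟨⟨x, hx⟩⟩ := hne
      obtain ⟨g, rfl⟩ := QuotientGroup.mk_surjective x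
      have hle : MulAut.conj g⁻¹ • I ≤ P := by
        intro y hy
        rw [aux_mem_conj, inv_inv] at hy
        have := (aux_coset P g _).mp (hx _ hy)
        convert this using 1
        group
      have hle2 := auxR_mono p hp hle
      rw [auxR_conj p hp, hRP] at hle2
      have hlt : MulAut.conj g⁻¹ • auxR p I < H :=
        lt_of_le_of_ne hle2 fun h => hI ⟨_, h⟩
      rw [Finset.prod_eq_zero (Finset.mem_univ (MulAut.conj g⁻¹ • auxR p I)), mul_zero]
      refine hu2 _ hlt ?_ _ ⟨_, rfl⟩
      rw [auxR_conj p hp, auxR_idem p hp]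
  · intro I hI
    rw [Pi.mul_apply, Finset.prod_apply, hpp.dvd_mul, hpp.dvd_finsetProd_iff]
    rintro (h | ⟨K, _, h⟩)
    · obtain ⟨g, hg⟩ := hI
      apply hfix
      rw [← hg, auxFix_conj]
      exact ((auxFix_mod p hp (G ⧸ P) I).dvd_iff dvd_rfl).mpr (Int.natCast_dvd_natCast.mp h)
    · exact hu1 K I hI h

end aux18

/-- If `H ≤ G` is `p`-perfect (`O^p(H) = H`), then there are a
positive integer `n` coprime to `p` and finite `G`-sets `X`, `Y` such that for
every subgroup `I ≤ G`, `|X^I| − |Y^I|` equals `n` if the image in `G` of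
`O^p(I)` is conjugate in `G` to `H`, and `0` otherwise. -/
theorem stmt18 {G : Type*} [Group G] [Finite G] (p : ℕ) (hp : p.Prime)
    (H : Subgroup G) (hH : pResidual p ↥H = ⊤) :
    ∃ (n : ℕ), 0 < n ∧ ¬ p ∣ n ∧
      ∃ (X Y : Type) (_ : Finite X) (_ : Finite Y)
        (sX : G → X → X) (sY : G → Y → Y),
        (∀ (g g' : G) (x : X), sX (g * g') x = sX g (sX g' x)) ∧
        (∀ x : X, sX 1 x = x) ∧
        (∀ (g g' : G) (y : Y), sY (g * g') y = sY g (sY g' y)) ∧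
        (∀ y : Y, sY 1 y = y) ∧
        ∀ I : Subgroup G,
          (Nat.card {x : X // ∀ i ∈ I, sX i x = x} : ℤ)
              - (Nat.card {y : Y // ∀ i ∈ I, sY i y = y} : ℤ)
            = if ∃ g : G, ((pResidual p ↥I).map I.subtype).map (MulAut.conj g).toMonoidHom = H
              then (n : ℤ) else 0 := by
  have hH' : auxR p H = H := by
    unfold auxR
    rw [hH]
    ext x
    simp
  have key : ∃ n : ℕ, 0 < n ∧ ¬ p ∣ n ∧
      (fun I => if I ∈ auxS p H then (n : ℤ) else 0) ∈ auxB G := by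
    obtain ⟨n, hn, hB⟩ := aux_main p hp _ H rfl hH'
    have hn0 : n ≠ 0 := by
      rintro rfl
      exact hn (dvd_zero _)
    refine ⟨n.natAbs, Int.natAbs_pos.mpr hn0, fun h => hn (Int.natCast_dvd.mpr h), ?_⟩
    rcases Int.natAbs_eq n with h | h
    · rw [← h]
      exact hB
    · have e : (n.natAbs : ℤ) = -n := by omega
      rw [e]
      convert neg_mem hB using 1
      funext I
      simp only [Pi.neg_apply]
      split_ifs <;> simp
  obtain ⟨n, hn0, hn, a, b, ⟨X, fX, aX, hX⟩, ⟨Y, fY, aY, hY⟩, he⟩ := key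
  refine ⟨n, hn0, hn, X, Y, fX, fY, fun g x => g • x, fun g x => g • x,
    fun g g' x => mul_smul g g' x, fun x => one_smul G x,
    fun g g' x => mul_smul g g' x, fun x => one_smul G x, fun I => ?_⟩
  have := congrFun he I
  rw [Pi.sub_apply, hX, hY] at this
  exact this.symm
end

section
/- Let G be a finite group and let X and Y be finite G-sets such that |X^H| = |Y^H| for every subgroup H ≤ G. Then X and Y are isomorphic as G-sets: there exists a bijection e : X → Y with e(g·x) = g·e(x) for all g ∈ G and x ∈ X. -/
open MulAction in
/-- The complement of an orbit. -/
def orbCompl (G : Type*) {X : Type*} [Group G] [MulAction G X] (x : X) : SubMulAction G X where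
  carrier := (orbit G x)ᶜ
  smul_mem' := by
    intro g a ha hb
    exact ha (by simpa using mem_orbit_of_mem_orbit g⁻¹ hb)

theorem card_split {X : Type*} [Finite X] (s : Set X) (P : X → Prop) :
    Nat.card {x // P x} = Nat.card {a : s // P a} + Nat.card {a : (sᶜ : Set X) // P a} := by
  classical
  rw [← Nat.card_sum]
  refine Nat.card_congr ?_
  refine ((Equiv.Set.sumCompl s).subtypeEquivOfSubtype (p := P)).symm.trans ?_
  exact Equiv.subtypeSum

open MulAction in
theorem orbit_iso {G X Y : Type*} [Group G] [MulAction G X] [MulAction G Y] (x : X) (y : Y)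
    (hxy : stabilizer G x = stabilizer G y) :
    ∃ e : orbit G x ≃ orbit G y, ∀ (g : G) (a : orbit G x), e (g • a) = g • e a := by
  let e : orbit G x ≃ orbit G y := (orbitEquivQuotientStabilizer G x).trans
    ((Subgroup.quotientEquivOfEq hxy).trans (orbitEquivQuotientStabilizer G y).symm)
  have key : ∀ g : G, e ⟨g • x, mem_orbit x g⟩ = ⟨g • y, mem_orbit y g⟩ := by
    intro g
    have : orbitEquivQuotientStabilizer G x ⟨g • x, mem_orbit x g⟩ = (g : G ⧸ stabilizer G x) := by
      rw [← Equiv.eq_symm_apply]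
      ext
      simp [orbitEquivQuotientStabilizer_symm_apply]
    ext
    simp only [e, Equiv.trans_apply, this, Subgroup.quotientEquivOfEq_mk,
      orbitEquivQuotientStabilizer_symm_apply]
  refine ⟨e, ?_⟩
  rintro g ⟨_, k, rfl⟩
  have h1 : g • (⟨k • x, mem_orbit x k⟩ : orbit G x) = ⟨(g * k) • x, mem_orbit x _⟩ := by
    ext; simp [mul_smul]
  change e (g • (⟨k • x, mem_orbit x k⟩ : orbit G x)) = g • e ⟨k • x, mem_orbit x k⟩
  rw [h1, key, key]
  ext; simp [mul_smul]

theorem glue_sets {X Y : Type*} (s : Set X) (t : Set Y) (e1 : s ≃ t)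
    (e2 : (sᶜ : Set X) ≃ (tᶜ : Set Y)) :
    ∃ E : X ≃ Y, (∀ a : s, E a = e1 a) ∧ ∀ a : (sᶜ : Set X), E a = e2 a := by
  classical
  refine ⟨(Equiv.Set.sumCompl s).symm.trans
      ((Equiv.sumCongr e1 e2).trans (Equiv.Set.sumCompl t)), ?_, ?_⟩
  · intro a
    simp [Equiv.Set.sumCompl_symm_apply_of_mem a.2]
  · intro a
    simp [Equiv.Set.sumCompl_symm_apply_of_notMem a.2]

open MulAction in
theorem burnside_aux {G : Type*} [Group G] [Finite G] (n : ℕ) :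
    ∀ (X : Type*) (Y : Type*) [Finite X] [Finite Y]
    [MulAction G X] [MulAction G Y] (_ : Nat.card X = n)
    (_ : ∀ H : Subgroup G,
      Nat.card {x : X // ∀ g ∈ H, g • x = x} = Nat.card {y : Y // ∀ g ∈ H, g • y = y}),
    ∃ e : X ≃ Y, ∀ (g : G) (x : X), e (g • x) = g • e x := by
  classical
  induction n using Nat.strong_induction_on with
  | _ n ih =>
  intro X Y _ _ _ _ hn h
  rcases isEmpty_or_nonempty X with hX | hX
  · have h0 := h ⊥
    have : IsEmpty {x : X // ∀ g ∈ (⊥ : Subgroup G), g • x = x} := inferInstance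
    rw [Nat.card_of_isEmpty] at h0
    have hY : IsEmpty Y := by
      have := (Nat.card_eq_zero.1 h0.symm).resolve_right (by simpa using (inferInstance : Finite _))
      refine ⟨fun y => this.false ⟨y, ?_⟩⟩
      intro g hg
      rw [Subgroup.mem_bot.1 hg, one_smul]
    exact ⟨Equiv.equivOfIsEmpty X Y, fun g x => hX.elim x⟩
  · obtain ⟨x, hx⟩ := Finite.exists_max (fun x : X => Nat.card (stabilizer G x))
    have tr1 : ∃ y : Y, stabilizer G x ≤ stabilizer G y := by
      have : 0 < Nat.card {a : X // ∀ g ∈ stabilizer G x, g • a = a} :=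
        Nat.card_pos_iff.2 ⟨⟨⟨x, fun g hg => hg⟩⟩, inferInstance⟩
      rw [h] at this
      obtain ⟨⟨⟨y, hy⟩⟩, _⟩ := Nat.card_pos_iff.1 this
      exact ⟨y, fun g hg => hy g hg⟩
    obtain ⟨y, hy⟩ := tr1
    have tr2 : ∃ x' : X, stabilizer G y ≤ stabilizer G x' := by
      have : 0 < Nat.card {a : Y // ∀ g ∈ stabilizer G y, g • a = a} :=
        Nat.card_pos_iff.2 ⟨⟨⟨y, fun g hg => hg⟩⟩, inferInstance⟩
      rw [← h] at this
      obtain ⟨⟨⟨y, hy⟩⟩, _⟩ := Nat.card_pos_iff.1 this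
      exact ⟨y, fun g hg => hy g hg⟩
    obtain ⟨x', hx'⟩ := tr2
    have hxy : stabilizer G x = stabilizer G y := by
      refine Subgroup.eq_of_le_of_card_ge hy ?_
      exact (Subgroup.card_le_of_le hx').trans (hx x')
    obtain ⟨e1, he1⟩ := orbit_iso (G := G) x y hxy
    have hlt : Nat.card (orbCompl G x) < n := by
      rw [← hn]
      exact Finite.card_subtype_lt (p := fun a => a ∈ orbCompl G x) (x := x)
        (fun hh => hh (mem_orbit_self x))
    obtain ⟨e2, he2⟩ := ih _ hlt (orbCompl G x) (orbCompl G y) rfl (by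
      intro H
      have hH := h H
      rw [card_split (orbit G x), card_split (orbit G y)] at hH
      have e : Nat.card {a : orbit G x // ∀ g ∈ H, g • (a : X) = a} =
          Nat.card {a : orbit G y // ∀ g ∈ H, g • (a : Y) = a} := by
        refine Nat.card_congr (e1.subtypeEquiv ?_)
        intro a
        refine forall₂_congr fun g _ => ?_
        rw [← orbit.coe_smul, ← orbit.coe_smul, Subtype.coe_inj, Subtype.coe_inj, ← he1,
          e1.apply_eq_iff_eq]
      rw [e] at hH
      have hH := Nat.add_left_cancel hH
      have c1 : ∀ (a : orbCompl G x) , (∀ g ∈ H, g • a = a) ↔ (∀ g ∈ H, g • (a : X) = a) := by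
        intro a
        simp [Subtype.ext_iff]
      have c2 : ∀ (a : orbCompl G y) , (∀ g ∈ H, g • a = a) ↔ (∀ g ∈ H, g • (a : Y) = a) := by
        intro a
        simp [Subtype.ext_iff]
      simp only [c1, c2]
      exact hH)
    obtain ⟨E, E1, E2⟩ := glue_sets (orbit G x) (orbit G y) e1 e2
    refine ⟨E, fun g a => ?_⟩
    by_cases ha : a ∈ orbit G x
    · have := E1 (g • ⟨a, ha⟩)
      rw [he1, orbit.coe_smul, orbit.coe_smul, ← E1] at this
      exact this
    · have E2' : ∀ a : orbCompl G x, E a = e2 a := E2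
      have := E2' (g • ⟨a, ha⟩)
      rw [he2, SubMulAction.val_smul, SubMulAction.val_smul, ← E2'] at this
      exact this


/-- If two finite `G`-sets `X` and `Y` satisfy `|X^H| = |Y^H|` for
every subgroup `H ≤ G`, then `X` and `Y` are isomorphic as `G`-sets. -/
theorem stmt19 {G X Y : Type*} [Group G] [Finite G] [Finite X] [Finite Y]
    [MulAction G X] [MulAction G Y]
    (h : ∀ H : Subgroup G,
      Nat.card {x : X // ∀ g ∈ H, g • x = x} = Nat.card {y : Y // ∀ g ∈ H, g • y = y}) :
    ∃ e : X ≃ Y, ∀ (g : G) (x : X), e (g • x) = g • e x := by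
  exact burnside_aux _ X Y rfl h
end
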